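/- arXiv:2502.16264 — 5 statements merged into one kernel-verified Lean document; each statement's English description precedes it below -/
import Mathlib

section
/- Let d ≥ 2 be an integer and fix integers ℓ, k ≥ 0. For every real r > 0, the radial Zernike polynomial R_{ℓ,k} satisfies the singular Sturm–Liouville equation d/dr[ r^{d−1}(1−r²) · R_{ℓ,k}′(r) ] − ℓ(ℓ+d−2) r^{d−3} R_{ℓ,k}(r) = −(ℓ+2k)(ℓ+2k+d) · r^{d−1} R_{ℓ,k}(r); that is, R_{ℓ,k} is an eigenfunction of the radial Zernike Sturm–Liouville operator with eigenvalue μ_{ℓ,k} = (ℓ+2k)(ℓ+2k+d). -/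
/-!
Write `R_{ℓ,k}(r) = √(2ℓ+4k+d) · ∑ₛ cₛ r^{nₛ}` with `nₛ = ℓ + 2(k - s)`. On the monomial `r^n` the
operator acts by

`(r^{d-1}(1-r²)(r^n)')' - ℓ(ℓ+d-2) r^{d-3} r^n + N(N+d) r^{d-1} r^n
  = (n-ℓ)(n+ℓ+d-2) r^{n+d-3} + (N-n)(N+n+d) r^{n+d-1}`, with `N = ℓ + 2k`.

Since `nₛ₊₁ = nₛ - 2`, the first term at index `s` has the same degree as the second term at
index `s + 1`, and the coefficient recurrence `zernikeCoeff_succ` makes them cancel. So the sum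
over `s` telescopes; the two boundary terms vanish, one because `N = n₀`, the other because
`binom(k, k+1) = 0`.
-/

open Finset

/-- The radial Zernike polynomial `R_{ℓ,k}` in dimension `d`. -/
noncomputable def zernikeR (d ℓ k : ℕ) (r : ℝ) : ℝ :=
  Real.sqrt (2 * ℓ + 4 * k + d) *
    ∑ s ∈ Finset.range (k + 1),
      (-1 : ℝ) ^ s * (k.choose s : ℝ) * ((k.factorial : ℝ))⁻¹ *
        (∏ j ∈ Finset.Icc 1 k, ((ℓ : ℝ) + 2 * k - s - j + d / 2)) *
        r ^ (ℓ + 2 * (k - s))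

/-- The coefficient of `r ^ (ℓ + 2 * (k - s))` in `zernikeR d ℓ k`, without the normalisation
factor `√(2ℓ+4k+d)`. It vanishes for `s > k`. -/
noncomputable def zernikeCoeff (d ℓ k s : ℕ) : ℝ :=
  (-1 : ℝ) ^ s * (k.choose s : ℝ) * ((k.factorial : ℝ))⁻¹ *
    (∏ j ∈ Finset.Icc 1 k, ((ℓ : ℝ) + 2 * k - s - j + d / 2))

lemma zernikeR_eq (d ℓ k : ℕ) : zernikeR d ℓ k = fun t => Real.sqrt (2 * ℓ + 4 * k + d) *
    ∑ s ∈ Finset.range (k + 1), zernikeCoeff d ℓ k s * t ^ (ℓ + 2 * (k - s)) := rfl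

/-- Passing from `x` to `x - 1` in a falling product trades its first factor for a new last one. -/
lemma shift_prod (x : ℝ) (k : ℕ) :
    (x - 1) * ∏ j ∈ Finset.Icc 1 k, (x - 1 - j) = (x - 1 - k) * ∏ j ∈ Finset.Icc 1 k, (x - j) := by
  induction k with
  | zero => simp
  | succ k ih =>
    rw [Finset.prod_Icc_succ_top (by omega), Finset.prod_Icc_succ_top (by omega), ← mul_assoc, ih]
    push_cast
    ring

lemma zernikeCoeff_succ (d ℓ k s : ℕ) :
    zernikeCoeff d ℓ k (s + 1) * (((s : ℝ) + 1) * (ℓ + 2 * k - s - 1 + d / 2)) =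
      -(zernikeCoeff d ℓ k s * (((k : ℝ) - s) * (ℓ + k - s - 1 + d / 2))) := by
  have hP := shift_prod ((ℓ : ℝ) + 2 * k - s + d / 2) k
  have hC : (k.choose (s + 1) : ℝ) * ((s : ℝ) + 1) = k.choose s * ((k : ℝ) - s) := by
    rcases le_or_gt s k with h | h
    · have := Nat.choose_succ_right_eq k s
      rw [← Nat.cast_sub h]
      exact_mod_cast this
    · simp [Nat.choose_eq_zero_of_lt h, Nat.choose_eq_zero_of_lt (Nat.lt_succ_of_lt h)]
  have h1 : ∏ j ∈ Finset.Icc 1 k, ((ℓ : ℝ) + 2 * k - (s + 1 : ℕ) - j + d / 2) =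
      ∏ j ∈ Finset.Icc 1 k, ((ℓ : ℝ) + 2 * k - s + d / 2 - 1 - j) :=
    Finset.prod_congr rfl fun j _ => by push_cast; ring
  have h2 : ∏ j ∈ Finset.Icc 1 k, ((ℓ : ℝ) + 2 * k - s - j + d / 2) =
      ∏ j ∈ Finset.Icc 1 k, ((ℓ : ℝ) + 2 * k - s + d / 2 - j) :=
    Finset.prod_congr rfl fun j _ => by ring
  unfold zernikeCoeff
  rw [h1, h2, pow_succ]
  generalize ∏ j ∈ Finset.Icc 1 k, ((ℓ : ℝ) + 2 * k - s + d / 2 - 1 - j) = P at *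
  generalize ∏ j ∈ Finset.Icc 1 k, ((ℓ : ℝ) + 2 * k - s + d / 2 - j) = Q at *
  linear_combination
    (-(-1 : ℝ) ^ s * (k.factorial : ℝ)⁻¹ * ((ℓ : ℝ) + 2 * k - s - 1 + d / 2) * P) * hC
      - ((-1 : ℝ) ^ s * (k.factorial : ℝ)⁻¹ * (k.choose s * ((k : ℝ) - s))) * hP

lemma deriv_zernikeR (d ℓ k : ℕ) (t : ℝ) : deriv (zernikeR d ℓ k) t =
    Real.sqrt (2 * ℓ + 4 * k + d) * ∑ s ∈ Finset.range (k + 1), zernikeCoeff d ℓ k s *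
      (((ℓ + 2 * (k - s) : ℕ) : ℝ) * t ^ (ℓ + 2 * (k - s) - 1)) := by
  rw [zernikeR_eq]
  exact ((HasDerivAt.fun_sum fun s _ =>
    (hasDerivAt_pow (ℓ + 2 * (k - s)) t).const_mul (zernikeCoeff d ℓ k s)).const_mul _).deriv

lemma flux_monomial (e n : ℕ) (t : ℝ) :
    t ^ (e + 1) * (1 - t ^ 2) * ((n : ℝ) * t ^ (n - 1)) =
      n * (t ^ (e + n) - t ^ (e + n + 2)) := by
  cases n with
  | zero => simp
  | succ n => rw [Nat.add_sub_cancel]; ring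

/-- The outer derivative `(r^{d-1}(1-r²)R')'`, in dimension `d = e + 2`, as a sum over monomials. -/
lemma deriv_flux (e ℓ k : ℕ) (r : ℝ) (hr : 0 < r) :
    deriv (fun t : ℝ => t ^ (e + 1) * (1 - t ^ 2) * deriv (zernikeR (e + 2) ℓ k) t) r =
      Real.sqrt (2 * ℓ + 4 * k + (e + 2 : ℕ)) * ∑ s ∈ Finset.range (k + 1),
        zernikeCoeff (e + 2) ℓ k s * (((ℓ + 2 * (k - s) : ℕ) : ℝ) *
          ((e + (ℓ + 2 * (k - s) : ℕ)) * (r ^ e * r ^ (ℓ + 2 * (k - s)) / r) -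
           (e + (ℓ + 2 * (k - s) : ℕ) + 2) * (r ^ (e + 1) * r ^ (ℓ + 2 * (k - s))))) := by
  have hfun : (fun t : ℝ => t ^ (e + 1) * (1 - t ^ 2) * deriv (zernikeR (e + 2) ℓ k) t) =
      fun t => Real.sqrt (2 * ℓ + 4 * k + (e + 2 : ℕ)) * ∑ s ∈ Finset.range (k + 1),
        zernikeCoeff (e + 2) ℓ k s * (((ℓ + 2 * (k - s) : ℕ) : ℝ) *
          (t ^ (e + (ℓ + 2 * (k - s))) - t ^ (e + (ℓ + 2 * (k - s)) + 2))) := by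
    funext t
    rw [deriv_zernikeR, mul_left_comm, Finset.mul_sum]
    congr 1
    refine Finset.sum_congr rfl fun s _ => ?_
    rw [mul_left_comm, flux_monomial]
  rw [hfun]
  refine ((HasDerivAt.fun_sum fun s _ => ?_).const_mul _).deriv
  refine HasDerivAt.const_mul _ (HasDerivAt.const_mul _ ?_)
  generalize ℓ + 2 * (k - s) = n
  refine ((hasDerivAt_pow (e + n) r).sub (hasDerivAt_pow (e + n + 2) r)).congr_deriv ?_
  have h0 : ((e + n : ℕ) : ℝ) * r ^ (e + n - 1) = (e + n) * (r ^ e * r ^ n / r) := by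
    rw [← pow_add]
    rcases Nat.eq_zero_or_pos (e + n) with h | h
    · have h' : (e : ℝ) + n = 0 := by exact_mod_cast h
      rw [h, h']
      simp
    · obtain ⟨m, hm⟩ := Nat.exists_eq_succ_of_ne_zero h.ne'
      rw [hm, Nat.succ_eq_add_one, Nat.add_sub_cancel, pow_succ, mul_div_cancel_right₀ _ hr.ne',
        ← Nat.succ_eq_add_one, ← hm]
      push_cast
      ring
  rw [h0, show e + n + 2 - 1 = e + n + 1 by omega]
  push_cast
  ring

/-- The radial Zernike polynomial `R_{ℓ,k}` satisfies the singular
Sturm–Liouville equation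
`d/dr[r^{d-1}(1-r²) R'(r)] - ℓ(ℓ+d-2) r^{d-3} R(r) = -(ℓ+2k)(ℓ+2k+d) r^{d-1} R(r)`
for every `r > 0`, i.e. it is an eigenfunction of the radial Zernike Sturm–Liouville
operator with eigenvalue `μ_{ℓ,k} = (ℓ+2k)(ℓ+2k+d)`. -/
theorem zernikeR_sturmLiouville (d ℓ k : ℕ) (hd : 2 ≤ d) (r : ℝ) (hr : 0 < r) :
    deriv (fun t : ℝ => t ^ ((d : ℤ) - 1) * (1 - t ^ 2) * deriv (zernikeR d ℓ k) t) r
      - (ℓ : ℝ) * ((ℓ : ℝ) + (d : ℝ) - 2) * r ^ ((d : ℤ) - 3) * zernikeR d ℓ k r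
    = -(((ℓ : ℝ) + 2 * k) * ((ℓ : ℝ) + 2 * k + d)) * r ^ ((d : ℤ) - 1) * zernikeR d ℓ k r := by
  obtain ⟨e, rfl⟩ := Nat.exists_eq_add_of_le' hd
  have hz1 : ∀ t : ℝ, t ^ (((e + 2 : ℕ) : ℤ) - 1) = t ^ (e + 1) := fun t => by
    rw [← zpow_natCast]
    congr 1
    push_cast
    ring
  have hz3 : r ^ (((e + 2 : ℕ) : ℤ) - 3) = r ^ e / r := by
    rw [show ((e + 2 : ℕ) : ℤ) - 3 = (e : ℤ) - 1 by push_cast; ring, zpow_sub_one₀ hr.ne',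
      zpow_natCast, div_eq_mul_inv]
  simp only [hz1]
  rw [hz3, deriv_flux e ℓ k r hr, zernikeR_eq]
  -- `F s` is the part of degree `nₛ + d - 1` coming from the index `s`.
  let F : ℕ → ℝ := fun s => zernikeCoeff (e + 2) ℓ k s *
    (4 * (s * ((ℓ : ℝ) + 2 * k - s + (e + 2 : ℕ) / 2))) * (r ^ (e + 1) * r ^ (ℓ + 2 * (k - s)))
  have hF : ∑ s ∈ Finset.range (k + 1), (F s - F (s + 1)) = 0 := by
    rw [Finset.sum_range_sub']
    simp [F, zernikeCoeff]
  rw [← sub_eq_zero]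
  refine Eq.trans ?_ (mul_eq_zero_of_right (Real.sqrt (2 * ℓ + 4 * k + (e + 2 : ℕ))) hF)
  beta_reduce
  rw [mul_left_comm _ (Real.sqrt _), mul_left_comm _ (Real.sqrt _), ← mul_sub, ← mul_sub]
  congr 1
  rw [Finset.mul_sum, Finset.mul_sum, ← Finset.sum_sub_distrib, ← Finset.sum_sub_distrib]
  refine Finset.sum_congr rfl fun s hs => ?_
  have hsk : s ≤ k := Nat.lt_succ_iff.mp (Finset.mem_range.mp hs)
  have hrec := zernikeCoeff_succ (e + 2) ℓ k s
  have hn : ((ℓ + 2 * (k - s) : ℕ) : ℝ) = ℓ + 2 * ((k : ℝ) - s) := by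
    push_cast [Nat.cast_sub hsk]
    ring
  have hFs : F (s + 1) = -(zernikeCoeff (e + 2) ℓ k s *
      (4 * (((k : ℝ) - s) * (ℓ + k - s - 1 + (e + 2 : ℕ) / 2)))) *
        (r ^ e * r ^ (ℓ + 2 * (k - s)) / r) := by
    rcases hsk.lt_or_eq with h | h
    · have hp : r ^ e * r ^ (ℓ + 2 * (k - s)) / r =
          r ^ (e + 1) * r ^ (ℓ + 2 * (k - (s + 1))) := by
        rw [show ℓ + 2 * (k - s) = ℓ + 2 * (k - (s + 1)) + 2 by omega]
        field_simp
        ring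
      simp only [F]
      rw [hp]
      push_cast at hrec ⊢
      linear_combination (4 * (r ^ (e + 1) * r ^ (ℓ + 2 * (k - (s + 1))))) * hrec
    · subst h
      simp [F, zernikeCoeff]
  rw [hFs, hn]
  simp only [F]
  push_cast
  ring
end

section
/- Let d ≥ 2 be an integer and let ℓ, k ≥ 0 be integers with (ℓ,k) ≠ (0,0). Then the derivative of the radial Zernike polynomial at the right endpoint is strictly positive: R_{ℓ,k}′(1) > 0. Moreover, for ℓ = k = 0 the polynomial R_{0,0} is the constant function √d. -/
/-!
Write `x = ℓ + d/2` and reverse the summation by `t = k - s`. The product over `j` becomes the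
rising factorial `(x + t)_k`, so up to the factor `√(2ℓ + 4k + d) / k!` the derivative at `1` is
the `k`-th forward difference, at `t = 0`, of `(x + t)_k (ℓ + 2t)`. Since
`(x + t)_k (ℓ + 2t) = 2 (x + t)_{k+1} + (ℓ - 2x - 2k) (x + t)_k`, this difference is read off from
the differences of rising factorials (`factorial_mul_fwdDiff_iter_ascPochhammer`), giving
`R_{ℓ,k}'(1) = √(2ℓ + 4k + d) (ℓ + 2k (k + ℓ + d/2))`, which is positive unless `ℓ = k = 0`.
-/

open Finset

/-- Forward differences of rising factorials: `Δⁿ (y)_{n+m} = (n+m)!/m! · (y+n)_m`, with the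
denominator cleared. -/
lemma factorial_mul_fwdDiff_iter_ascPochhammer (n : ℕ) : ∀ (m : ℕ) (y : ℝ),
    (m.factorial : ℝ) * ((fwdDiff (1 : ℝ))^[n] (fun z => (ascPochhammer ℝ (n + m)).eval z)) y =
      ((n + m).factorial : ℝ) * (ascPochhammer ℝ m).eval (y + n) := by
  induction n with
  | zero => intro m y; simp
  | succ n ih =>
    intro m y
    have h1 := ih (m + 1) y
    have h2 := ih (m + 1) (y + 1)
    have hl : (ascPochhammer ℝ (m + 1)).eval (y + n) =
        (y + n) * (ascPochhammer ℝ m).eval (y + n + 1) := by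
      simp [ascPochhammer_succ_left]
    have hr := ascPochhammer_succ_eval (S := ℝ) m (y + n + 1)
    rw [show y + 1 + (n : ℝ) = y + n + 1 by ring, hr] at h2
    rw [hl] at h1
    rw [show n + 1 + m = n + (m + 1) by ring, Function.iterate_succ_apply', fwdDiff]
    have hm : ((m : ℝ) + 1) ≠ 0 := by positivity
    rw [Nat.factorial_succ m] at h1 h2
    push_cast at h1 h2 ⊢
    apply mul_left_cancel₀ hm
    rw [← add_assoc y]
    linear_combination h2 - h1

lemma sum_alternating_ascPochhammer (k m : ℕ) (x : ℝ) :
    (m.factorial : ℝ) * ∑ t ∈ Finset.range (k + 1),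
      (-1 : ℝ) ^ (k - t) * (k.choose t : ℝ) * (ascPochhammer ℝ (k + m)).eval (x + t) =
      ((k + m).factorial : ℝ) * (ascPochhammer ℝ m).eval (x + k) := by
  rw [← factorial_mul_fwdDiff_iter_ascPochhammer, fwdDiff_iter_eq_sum_shift]
  simp

lemma prod_Icc_eq_ascPochhammer (k : ℕ) (z : ℝ) :
    ∏ j ∈ Finset.Icc 1 k, (z + k - j) = (ascPochhammer ℝ k).eval z := by
  induction k generalizing z with
  | zero => simp
  | succ k ih =>
    have h := ih (z + 1)
    rw [Finset.prod_Icc_succ_top (by omega), ascPochhammer_succ_left]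
    simp only [Polynomial.eval_mul, Polynomial.eval_X, Polynomial.eval_comp, Polynomial.eval_add,
      Polynomial.eval_one]
    rw [← h, mul_comm]
    congr 1
    · ring
    · refine Finset.prod_congr rfl fun j _ => ?_
      push_cast; ring

/-- The exact value of `R_{ℓ,k}'(1)`. -/
lemma deriv_zernikeR_one (d ℓ k : ℕ) :
    deriv (zernikeR d ℓ k) 1 =
      Real.sqrt (2 * ℓ + 4 * k + d) * (ℓ + 2 * k * (k + ℓ + d / 2)) := by
  have hderiv : HasDerivAt (zernikeR d ℓ k)
      (Real.sqrt (2 * ℓ + 4 * k + d) *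
        ∑ s ∈ Finset.range (k + 1),
          (-1 : ℝ) ^ s * (k.choose s : ℝ) * ((k.factorial : ℝ))⁻¹ *
            (∏ j ∈ Finset.Icc 1 k, ((ℓ : ℝ) + 2 * k - s - j + d / 2)) *
            ((ℓ + 2 * (k - s) : ℕ) : ℝ)) 1 := by
    unfold zernikeR
    refine HasDerivAt.const_mul _ (HasDerivAt.fun_sum fun s _ => HasDerivAt.const_mul _ ?_)
    simpa using hasDerivAt_pow (ℓ + 2 * (k - s)) (1 : ℝ)
  rw [hderiv.deriv]
  congr 1
  set x : ℝ := ℓ + d / 2 with hx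
  rw [← Finset.sum_range_reflect]
  have h0 := sum_alternating_ascPochhammer k 0 x
  have h1 := sum_alternating_ascPochhammer k 1 x
  simp only [Nat.factorial_zero, Nat.factorial_one, Nat.cast_one, one_mul, add_zero,
    ascPochhammer_zero, ascPochhammer_one, Polynomial.eval_one, Polynomial.eval_X, mul_one] at h0 h1
  have hk : (k.factorial : ℝ) ≠ 0 := by positivity
  have key : ∀ t ∈ Finset.range (k + 1),
      (-1 : ℝ) ^ (k + 1 - 1 - t) * (k.choose (k + 1 - 1 - t) : ℝ) * ((k.factorial : ℝ))⁻¹ *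
        (∏ j ∈ Finset.Icc 1 k, ((ℓ : ℝ) + 2 * k - (k + 1 - 1 - t : ℕ) - j + d / 2)) *
        ((ℓ + 2 * (k - (k + 1 - 1 - t)) : ℕ) : ℝ) =
      ((k.factorial : ℝ))⁻¹ * (2 * ((-1 : ℝ) ^ (k - t) * (k.choose t : ℝ) *
          (ascPochhammer ℝ (k + 1)).eval (x + t)) +
        (ℓ - 2 * x - 2 * k) * ((-1 : ℝ) ^ (k - t) * (k.choose t : ℝ) *
          (ascPochhammer ℝ k).eval (x + t))) := by
    intro t ht
    have htk : t ≤ k := by simpa [Nat.lt_succ_iff] using ht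
    rw [show k + 1 - 1 - t = k - t by omega, Nat.choose_symm htk,
      show k - (k - t) = t by omega, ascPochhammer_succ_eval, ← prod_Icc_eq_ascPochhammer,
      Finset.prod_congr rfl (g := fun j : ℕ => x + t + k - (j : ℝ))
        (fun j _ => by rw [Nat.cast_sub htk, hx]; ring)]
    push_cast
    ring
  rw [Finset.sum_congr rfl key, ← Finset.mul_sum, Finset.sum_add_distrib, ← Finset.mul_sum,
    ← Finset.mul_sum, h0, h1, Nat.factorial_succ]
  push_cast
  rw [hx]
  field_simp
  ring

/-- For `(ℓ,k) ≠ (0,0)` the derivative of the radial Zernike polynomial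
at the right endpoint is strictly positive, `R_{ℓ,k}'(1) > 0`; moreover `R_{0,0}` is the
constant function `√d`. -/
theorem zernikeR_deriv_one_pos (d ℓ k : ℕ) (hd : 2 ≤ d) :
    (¬(ℓ = 0 ∧ k = 0) → 0 < deriv (zernikeR d ℓ k) 1) ∧
    (∀ r : ℝ, zernikeR d 0 0 r = Real.sqrt d) := by
  refine ⟨fun h => ?_, fun r => by simp [zernikeR]⟩
  rw [deriv_zernikeR_one]
  have hd' : (0 : ℝ) < d := by exact_mod_cast (by omega : 0 < d)
  refine mul_pos (Real.sqrt_pos.mpr (by positivity)) ?_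
  rcases Nat.eq_zero_or_pos k with rfl | hk
  · have hl : (0 : ℝ) < ℓ := by exact_mod_cast (by omega : 0 < ℓ)
    simpa using hl
  · have hk' : (0 : ℝ) < k := by exact_mod_cast hk
    positivity
end

section
/- Let d ≥ 2 be an integer and let ℓ, k ≥ 0 be integers. Then for every r ∈ [0,1], |R_{ℓ,k}(r)| ≤ |C_{ℓ,k}|, where |C_{ℓ,k}| = √(2ℓ+4k+d) · (1/k!) · ∏_{j=1}^{k} (ℓ+k−j+d/2) is the absolute value of the normalizing constant of R_{ℓ,k}. -/
/-!
Put `β = ℓ + d/2 - 1 ≥ 0` and `x = r²`. Then `R_{ℓ,k}(r) = √(2ℓ+4k+d) · r^ℓ · p(x)`, where `p` is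
the Jacobi polynomial `P_k^{(0,β)}(2x - 1)`, and the constant `C_{ℓ,k}` is `√(2ℓ+4k+d) · |p(0)|`.
So it suffices that `|p| ≤ |p(0)|` on `[0,1]`, which is shown by Sonine's method.

The polynomial `p` solves `x(1-x)p'' + (β+1-(β+2)x)p' + λp = 0` with `λ = k(k+β+1)`
(`jacobi_ode`). Hence `F = λp² + x(1-x)p'²` satisfies `F' = ((2β+2)x - (2β+1)) p'²`, so `F` decreases
and then increases on `[0,1]`, which gives `λp² ≤ F ≤ max (F 0) (F 1) = λ · max (p(0)²) (p(1)²)`.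
Finally `p(1) = 1` because `p(1)` is a `k`-th finite difference of a falling factorial of degree `k`,
and `|p(0)| = (β+k choose k) ≥ 1`.
-/

open Finset

/-- The falling factorial `t (t-1) ⋯ (t-k+1)` of a real number. -/
noncomputable def fallFac (k : ℕ) (t : ℝ) : ℝ := ∏ j ∈ Finset.Icc 1 k, (t + 1 - j)

lemma fallFac_zero (t : ℝ) : fallFac 0 t = 1 := by simp [fallFac]

lemma fallFac_succ (k : ℕ) (t : ℝ) : fallFac (k + 1) t = fallFac k t * (t - k) := by
  unfold fallFac
  rw [Finset.prod_Icc_succ_top (by omega)]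
  push_cast
  ring

lemma fallFac_succ_add_one (k : ℕ) (t : ℝ) :
    fallFac (k + 1) (t + 1) = (t + 1) * fallFac k t := by
  induction k with
  | zero => simp [fallFac_succ, fallFac_zero]
  | succ k ih =>
    rw [fallFac_succ, ih, fallFac_succ]
    push_cast
    ring

lemma fwdDiff_fallFac (k : ℕ) :
    fwdDiff 1 (fallFac (k + 1)) = ((k : ℝ) + 1) • fallFac k := by
  funext t
  simp only [fwdDiff, Pi.smul_apply, smul_eq_mul]
  rw [fallFac_succ_add_one, fallFac_succ]
  ring

lemma fwdDiff_iter_fallFac (k : ℕ) (t : ℝ) :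
    (fwdDiff 1)^[k] (fallFac k) t = k.factorial := by
  induction k with
  | zero => simp [fallFac_zero]
  | succ k ih =>
    rw [Function.iterate_succ_apply, fwdDiff_fallFac, fwdDiff_iter_const_smul, Pi.smul_apply, ih,
      Nat.factorial_succ]
    push_cast
    simp

lemma factorial_le_fallFac (k : ℕ) (β : ℝ) (hβ : 0 ≤ β) :
    (k.factorial : ℝ) ≤ fallFac k (β + k) := by
  induction k with
  | zero => simp [fallFac_zero]
  | succ k ih =>
    have h := fallFac_succ_add_one k (β + k)
    rw [Nat.factorial_succ]
    push_cast
    rw [← add_assoc, h]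
    gcongr
    linarith

/-- The coefficient of `x^m` in `k! · P_k^{(0,β)}(2x - 1)`. -/
noncomputable def jacobiCoeff (β : ℝ) (k m : ℕ) : ℝ :=
  (-1) ^ (k + m) * (k.choose m : ℝ) * fallFac k (β + k + m)

lemma jacobiCoeff_eq_zero (β : ℝ) {k m : ℕ} (h : k < m) : jacobiCoeff β k m = 0 := by
  simp [jacobiCoeff, Nat.choose_eq_zero_of_lt h]

/-- The two-term recurrence of the hypergeometric coefficients. -/
lemma jacobiCoeff_succ (β : ℝ) (k m : ℕ) :
    ((m : ℝ) + 1) * (m + β + 1) * jacobiCoeff β k (m + 1)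
      = ((m : ℝ) - k) * (m + k + β + 1) * jacobiCoeff β k m := by
  have h1 : (β + m + 1) * fallFac k (β + k + m + 1)
      = (β + k + m + 1) * fallFac k (β + k + m) := by
    rw [← fallFac_succ_add_one, fallFac_succ]
    ring
  have h2 : ((m : ℝ) + 1) * (k.choose (m + 1) : ℝ) = ((k : ℝ) - m) * (k.choose m : ℝ) := by
    rcases le_or_gt m k with h | h
    · have h3 := Nat.choose_succ_right_eq k m
      have h4 : ((k.choose (m + 1) : ℝ)) * (m + 1) = (k.choose m : ℝ) * ((k - m : ℕ) : ℝ) := by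
        exact_mod_cast h3
      rw [Nat.cast_sub h] at h4
      linarith
    · simp [Nat.choose_eq_zero_of_lt h, Nat.choose_eq_zero_of_lt (Nat.lt_succ_of_lt h)]
  unfold jacobiCoeff
  push_cast
  rw [← add_assoc k m 1, pow_succ, ← add_assoc (β + k)]
  linear_combination (-(-1) ^ (k + m) * ((m : ℝ) + 1) * (k.choose (m + 1) : ℝ)) * h1
    - (-1) ^ (k + m) * (β + k + m + 1) * fallFac k (β + k + m) * h2

open Polynomial in
/-- The shifted Jacobi polynomial `k! · P_k^{(0,β)}(2x - 1)`. -/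
noncomputable def jacobi (β : ℝ) (k : ℕ) : ℝ[X] :=
  ∑ m ∈ Finset.range (k + 1), C (jacobiCoeff β k m) * X ^ m

lemma jacobi_coeff (β : ℝ) (k m : ℕ) : (jacobi β k).coeff m = jacobiCoeff β k m := by
  unfold jacobi
  simp only [Polynomial.finsetSum_coeff, Polynomial.coeff_C_mul, Polynomial.coeff_X_pow,
    mul_ite, mul_one, mul_zero, Finset.sum_ite_eq, Finset.mem_range]
  split_ifs with h
  · rfl
  · rw [jacobiCoeff_eq_zero β (by omega)]

lemma jacobi_eval (β : ℝ) (k : ℕ) (x : ℝ) :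
    (jacobi β k).eval x = ∑ m ∈ Finset.range (k + 1), jacobiCoeff β k m * x ^ m := by
  simp [jacobi, Polynomial.eval_finsetSum]

open Polynomial in
lemma jacobi_ode_poly (β : ℝ) (k : ℕ) :
    X * derivative (derivative (jacobi β k)) - X * (X * derivative (derivative (jacobi β k)))
      + C (β + 1) * derivative (jacobi β k) - C (β + 2) * (X * derivative (jacobi β k))
      + C ((k : ℝ) * (k + β + 1)) * jacobi β k = 0 := by
  ext m
  have h := jacobiCoeff_succ β k m
  rcases m with _ | _ | m <;>
  · simp only [coeff_add, coeff_sub, coeff_C_mul, coeff_X_mul, coeff_X_mul_zero, coeff_derivative,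
      jacobi_coeff, coeff_zero]
    push_cast at h ⊢
    linear_combination h

open Polynomial in
/-- The hypergeometric differential equation of the shifted Jacobi polynomial. -/
lemma jacobi_ode (β : ℝ) (k : ℕ) (x : ℝ) :
    x * (1 - x) * (derivative (derivative (jacobi β k))).eval x
      + (β + 1 - (β + 2) * x) * (derivative (jacobi β k)).eval x
      + k * (k + β + 1) * (jacobi β k).eval x = 0 := by
  have h := congrArg (Polynomial.eval x) (jacobi_ode_poly β k)
  simp only [eval_add, eval_sub, eval_mul, eval_X, eval_C, eval_zero] at h
  linear_combination h

lemma jacobi_eval_one (β : ℝ) (k : ℕ) : (jacobi β k).eval 1 = k.factorial := by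
  rw [jacobi_eval, ← fwdDiff_iter_fallFac k (β + k), fwdDiff_iter_eq_sum_shift]
  refine Finset.sum_congr rfl fun m hm => ?_
  have hm' : m ≤ k := by simpa [Nat.lt_succ_iff] using hm
  have hs : (-1 : ℝ) ^ (k + m) = (-1) ^ (k - m) := by
    obtain ⟨n, rfl⟩ := Nat.exists_eq_add_of_le hm'
    rw [Nat.add_sub_cancel_left, show m + n + m = 2 * m + n by ring, pow_add, pow_mul]
    simp
  simp [jacobiCoeff, hs]

lemma jacobi_eval_zero (β : ℝ) (k : ℕ) :
    (jacobi β k).eval 0 = (-1) ^ k * fallFac k (β + k) := by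
  rw [← Polynomial.coeff_zero_eq_eval_zero, jacobi_coeff]
  simp [jacobiCoeff]

/-- A function on `[0,1]` whose derivative is nonpositive before `c` and nonnegative after it is
bounded by the larger of its endpoint values. -/
lemma le_max_of_deriv_sign {F F' : ℝ → ℝ} {c : ℝ} (hF : ∀ x, HasDerivAt F (F' x) x)
    (hneg : ∀ x, x ≤ c → F' x ≤ 0) (hpos : ∀ x, c ≤ x → 0 ≤ F' x)
    {x : ℝ} (h0 : 0 ≤ x) (h1 : x ≤ 1) : F x ≤ max (F 0) (F 1) := by
  have hc : Continuous F := continuous_iff_continuousAt.2 fun x => (hF x).continuousAt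
  rcases le_total x c with h | h
  · have : AntitoneOn F (Set.Iic c) := by
      refine antitoneOn_of_deriv_nonpos (convex_Iic c) hc.continuousOn
        (fun y _ => (hF y).differentiableAt.differentiableWithinAt) fun y hy => ?_
      rw [(hF y).deriv]
      exact hneg y (Set.mem_Iic.1 (interior_subset hy))
    exact le_max_of_le_left (this (h0.trans h) h h0)
  · have : MonotoneOn F (Set.Ici c) := by
      refine monotoneOn_of_deriv_nonneg (convex_Ici c) hc.continuousOn
        (fun y _ => (hF y).differentiableAt.differentiableWithinAt) fun y hy => ?_
      rw [(hF y).deriv]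
      exact hpos y (Set.mem_Ici.1 (interior_subset hy))
    exact le_max_of_le_right (this h (h.trans h1) h1)

open Polynomial in
/-- On `[0,1]` the shifted Jacobi polynomial attains its largest absolute value at `0`. -/
lemma abs_jacobi_le (β : ℝ) (hβ : 0 ≤ β) (k : ℕ) {x : ℝ} (h0 : 0 ≤ x) (h1 : x ≤ 1) :
    |(jacobi β k).eval x| ≤ fallFac k (β + k) := by
  have hfac := factorial_le_fallFac k β hβ
  have hfac0 : (0 : ℝ) < k.factorial := by exact_mod_cast k.factorial_pos
  rcases Nat.eq_zero_or_pos k with rfl | hk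
  · simp [jacobi_eval, jacobiCoeff, fallFac_zero]
  set p := jacobi β k with hp
  set lam : ℝ := k * (k + β + 1) with hlam
  have hk' : (0 : ℝ) < k := by exact_mod_cast hk
  have hlam0 : 0 < lam := by positivity
  have hder : ∀ y, HasDerivAt
      (fun y => lam * p.eval y ^ 2 + y * (1 - y) * (derivative p).eval y ^ 2)
      (((2 * β + 2) * y - (2 * β + 1)) * (derivative p).eval y ^ 2) y := by
    intro y
    have e1 := ((p.hasDerivAt y).pow 2).const_mul lam
    have e2 := ((hasDerivAt_id y).mul ((hasDerivAt_id y).const_sub 1)).mul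
      (((derivative p).hasDerivAt y).pow 2)
    refine (e1.add e2).congr_deriv ?_
    have ode := jacobi_ode β k y
    rw [← hp, ← hlam] at ode
    simp
    linear_combination (2 * (derivative p).eval y) * ode
  have hc : 0 < 2 * β + 2 := by linarith
  have key := le_max_of_deriv_sign (c := (2 * β + 1) / (2 * β + 2)) hder
    (fun y hy => by
      rw [le_div_iff₀ hc] at hy
      exact mul_nonpos_of_nonpos_of_nonneg (by linarith) (sq_nonneg _))
    (fun y hy => by
      rw [div_le_iff₀ hc] at hy
      exact mul_nonneg (by linarith) (sq_nonneg _)) h0 h1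
  have hz : p.eval 0 ^ 2 = fallFac k (β + k) ^ 2 := by
    rw [hp, jacobi_eval_zero, mul_pow, ← pow_mul, mul_comm k 2, pow_mul]
    simp
  have ho : p.eval 1 ^ 2 ≤ fallFac k (β + k) ^ 2 := by
    rw [hp, jacobi_eval_one]
    gcongr
  have hmid : 0 ≤ x * (1 - x) * (derivative p).eval x ^ 2 :=
    mul_nonneg (mul_nonneg h0 (by linarith)) (sq_nonneg _)
  have hle : lam * p.eval x ^ 2 ≤ lam * fallFac k (β + k) ^ 2 := by
    refine le_trans (le_trans (by linarith) key) (max_le ?_ ?_)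
    · simp [hz]
    · simpa using mul_le_mul_of_nonneg_left ho hlam0.le
  exact abs_le_of_sq_le_sq (le_of_mul_le_mul_left hle hlam0) (by linarith)

lemma zernikeR_eq_s5 (d ℓ k : ℕ) (r : ℝ) :
    zernikeR d ℓ k r = Real.sqrt (2 * ℓ + 4 * k + d) * ((k.factorial : ℝ)⁻¹ *
      (r ^ ℓ * (jacobi (ℓ + d / 2 - 1) k).eval (r ^ 2))) := by
  unfold zernikeR
  rw [jacobi_eval, ← Finset.sum_range_reflect]
  congr 1
  rw [Finset.mul_sum, Finset.mul_sum]
  refine Finset.sum_congr rfl fun m hm => ?_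
  have hm' : m ≤ k := by simpa [Nat.lt_succ_iff] using hm
  obtain ⟨n, rfl⟩ := Nat.exists_eq_add_of_le hm'
  have e1 : m + n + 1 - 1 - m = n := by omega
  have e2 : m + n - n = m := by omega
  have hs : (-1 : ℝ) ^ (m + n + m) = (-1) ^ n := by
    rw [show m + n + m = 2 * m + n by ring, pow_add, pow_mul]
    simp
  have hchoose : (m + n).choose n = (m + n).choose m := by
    rw [Nat.choose_symm_add]
  rw [e1, e2, jacobiCoeff, hs, hchoose, fallFac, pow_add, pow_mul]
  have hprod : ∏ j ∈ Finset.Icc 1 (m + n), ((ℓ : ℝ) + 2 * (m + n : ℕ) - n - j + d / 2)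
      = ∏ j ∈ Finset.Icc 1 (m + n), ((ℓ : ℝ) + d / 2 - 1 + (m + n : ℕ) + m + 1 - j) := by
    refine Finset.prod_congr rfl fun j _ => ?_
    push_cast
    ring
  rw [hprod]
  ring

/-- On `[0,1]` the radial Zernike polynomial is bounded by the absolute
value of its normalizing constant:
`|R_{ℓ,k}(r)| ≤ |C_{ℓ,k}| = √(2ℓ+4k+d) · (1/k!) · ∏_{j=1}^k (ℓ+k-j+d/2)`. -/
theorem zernikeR_uniform_bound (d ℓ k : ℕ) (hd : 2 ≤ d) :
    ∀ r ∈ Set.Icc (0:ℝ) 1,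
      |zernikeR d ℓ k r| ≤
        Real.sqrt (2 * ℓ + 4 * k + d) * ((k.factorial : ℝ))⁻¹ *
          ∏ j ∈ Finset.Icc 1 k, ((ℓ : ℝ) + k - j + d / 2) := by
  rintro r ⟨h0, h1⟩
  have hd' : (2 : ℝ) ≤ d := by exact_mod_cast hd
  have hl : (0 : ℝ) ≤ ℓ := Nat.cast_nonneg ℓ
  have hprod : ∏ j ∈ Finset.Icc 1 k, ((ℓ : ℝ) + k - j + d / 2)
      = fallFac k ((ℓ : ℝ) + d / 2 - 1 + k) := by
    unfold fallFac
    refine Finset.prod_congr rfl fun j _ => ?_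
    ring
  have hJ := abs_jacobi_le ((ℓ : ℝ) + d / 2 - 1) (by linarith) k (x := r ^ 2)
    (sq_nonneg r) (pow_le_one₀ h0 h1)
  rw [hprod, zernikeR_eq_s5, abs_mul, abs_mul, abs_mul, abs_of_nonneg (Real.sqrt_nonneg _),
    abs_of_nonneg (by positivity : (0 : ℝ) ≤ (k.factorial : ℝ)⁻¹), abs_of_nonneg (pow_nonneg h0 ℓ),
    mul_assoc]
  gcongr
  exact (mul_le_of_le_one_left (abs_nonneg _) (pow_le_one₀ h0 h1)).trans hJ
end

section
/- Let d ≥ 2 be an integer and let ℓ, p ≥ 0 be integers. Then for every real r, the monomial r^{ℓ+2p} expands in the radial Zernike polynomials as r^{ℓ+2p} = Σ_{k=0}^{p} χ_{ℓ,k,p} · R_{ℓ,k}(r), where χ_{ℓ,k,p} = (√(2ℓ+4k+d) / (2p+2ℓ+2k+d)) · binom(p,k) · k! / ∏_{j=1}^{k} (p+ℓ+k−j+d/2), with the empty product (for k = 0) equal to 1. -/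
/-!
Put `a = ℓ + d/2` and write `(x)_k = x (x+1) ⋯ (x+k-1)`. Summing over `m = k - s` instead of `s`,
the product `χ_{ℓ,k,p} R_{ℓ,k}(r)` becomes
`∑_m (-1)^{k+m} (a+2k) C(p,k) C(k,m) (a+m)_k / (p+a)_{k+1} · r^{ℓ+2m}`
(`zernikeChi_mul_zernikeR`), so the claim is that the coefficient of `r^{ℓ+2m}`, summed over `k`,
is `1` for `m = p` and `0` for `m < p` (`sum_coeff`). With `p = m + n`, `k = m + i`, `b = a + 2m`,
the identities `C(p,k) C(k,m) = C(p,m) C(n,i)` and `(x)_{m+i} = (x)_m (x+m)_i` reduce this to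
`∑_i (-1)^i (b+2i) C(n,i) (b)_i / (b+n)_{i+1} = 0` for `n ≥ 1`, and that sum telescopes:
its partial sums have the closed form in `sum_telescope`.
-/

open Finset

/-- The expansion coefficient `χ_{ℓ,k,p}` of the monomial `r^{ℓ+2p}` in the radial
Zernike polynomials. -/
noncomputable def zernikeChi (d ℓ k p : ℕ) : ℝ :=
  Real.sqrt (2 * ℓ + 4 * k + d) / (2 * p + 2 * ℓ + 2 * k + d) * (p.choose k : ℝ) *
    (k.factorial : ℝ) / ∏ j ∈ Finset.Icc 1 k, ((p : ℝ) + ℓ + k - j + d / 2)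

/-- The rising factorial `x (x+1) ⋯ (x+k-1)`. -/
noncomputable def rising (x : ℝ) (k : ℕ) : ℝ := ∏ i ∈ Finset.range k, (x + i)

lemma rising_zero (x : ℝ) : rising x 0 = 1 := by simp [rising]

lemma rising_succ (x : ℝ) (k : ℕ) : rising x (k + 1) = rising x k * (x + k) := by
  simp [rising, Finset.prod_range_succ]

lemma rising_add (x : ℝ) (m i : ℕ) : rising x (m + i) = rising x m * rising (x + m) i := by
  simp only [rising, Finset.prod_range_add]
  congr 1
  refine Finset.prod_congr rfl fun j _ => ?_
  push_cast
  ring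

lemma rising_pos {x : ℝ} (hx : 0 < x) (k : ℕ) : 0 < rising x k :=
  Finset.prod_pos fun i _ => by positivity

/-- The descending products of the definitions, read from the last factor to the first. -/
lemma prod_Icc_eq_rising (x : ℝ) (k : ℕ) :
    ∏ j ∈ Finset.Icc 1 k, (x + k - j) = rising x k := by
  rw [rising, ← Finset.prod_range_reflect, ← Finset.Ico_add_one_right_eq_Icc,
    Finset.prod_Ico_eq_prod_range]
  refine Finset.prod_congr (by simp) fun j hj => ?_
  have hj' : j + 1 ≤ k := by simpa using hj
  rw [show k - 1 - j = k - (j + 1) by omega, Nat.cast_sub hj']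
  push_cast
  ring

lemma sum_telescope {b : ℝ} (hb : 0 < b) (N I : ℕ) :
    ∑ i ∈ Finset.range (I + 1),
      (-1 : ℝ) ^ i * (b + 2 * i) * ((N + 1).choose i : ℝ) * rising b i /
        rising (b + (N + 1 : ℕ)) (i + 1) =
      (-1 : ℝ) ^ I * (N.choose I : ℝ) * rising b (I + 1) / rising (b + (N + 1 : ℕ)) (I + 1) := by
  induction I with
  | zero => simp [rising_succ, rising_zero]
  | succ I ih =>
    rw [Finset.sum_range_succ, ih]
    have hB : 0 < b + ((N + 1 : ℕ) : ℝ) := by positivity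
    have h1 := (rising_pos hB (I + 1)).ne'
    have h2 : b + ((N + 1 : ℕ) : ℝ) + ((I + 1 : ℕ) : ℝ) ≠ 0 := by positivity
    rw [rising_succ (b + ((N + 1 : ℕ) : ℝ)) (I + 1), rising_succ b (I + 1)]
    -- the absorption identity, in a form free of truncated subtraction
    have hc : ((N.choose (I + 1) : ℕ) : ℝ) * (I + 1) + (N.choose I : ℝ) * (I + 1)
        = (N + 1) * (N.choose I : ℝ) := by
      have h := Nat.add_one_mul_choose_eq N I
      rw [Nat.choose_succ_succ' N I] at h
      have h' : ((N : ℝ) + 1) * (N.choose I : ℝ)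
          = ((N.choose I : ℝ) + (N.choose (I + 1) : ℝ)) * (I + 1) := by exact_mod_cast h
      linarith
    rw [Nat.choose_succ_succ' N I]
    generalize rising (b + ((N + 1 : ℕ) : ℝ)) (I + 1) = X at *
    generalize rising b (I + 1) = Y at *
    rw [div_add_div _ _ h1 (mul_ne_zero h1 h2), div_eq_div_iff (by positivity) (by positivity)]
    push_cast
    rw [pow_succ]
    linear_combination
      (-(-1 : ℝ) ^ I * Y * X * X * (b + (N + 1) + (I + 1))) * hc

/-- The coefficient of `r^{ℓ+2m}` in the expansion of `r^{ℓ+2(m+n)}`, where `a = ℓ + d/2`. -/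
lemma sum_coeff {a : ℝ} (ha : 0 < a) (m n : ℕ) :
    ∑ k ∈ Finset.range (m + n + 1),
      (-1 : ℝ) ^ (k + m) * (a + 2 * k) * ((m + n).choose k : ℝ) * (k.choose m : ℝ) *
        rising (a + m) k / rising (a + (m + n : ℕ)) (k + 1) = if n = 0 then 1 else 0 := by
  rw [add_assoc, Finset.sum_range_add, Finset.sum_eq_zero, zero_add]
  swap
  · intro k hk
    rw [Nat.choose_eq_zero_of_lt (Finset.mem_range.mp hk)]
    simp
  have hb : 0 < a + 2 * m := by positivity
  have key : ∀ i : ℕ, (-1 : ℝ) ^ (m + i + m) * (a + 2 * ((m + i : ℕ) : ℝ)) *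
        ((m + n).choose (m + i) : ℝ) * ((m + i).choose m : ℝ) *
        rising (a + m) (m + i) / rising (a + (m + n : ℕ)) (m + i + 1) =
      ((m + n).choose m : ℝ) * rising (a + m) m / rising (a + (m + n : ℕ)) m *
        ((-1 : ℝ) ^ i * ((a + 2 * m) + 2 * i) * (n.choose i : ℝ) * rising (a + 2 * m) i /
          rising ((a + 2 * m) + n) (i + 1)) := by
    intro i
    have hch : ((m + n).choose (m + i) : ℝ) * ((m + i).choose m : ℝ)
        = ((m + n).choose m : ℝ) * (n.choose i : ℝ) := by
      have h := Nat.choose_mul (n := m + n) (k := m + i) (s := m) (Nat.le_add_right m i)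
      rw [Nat.add_sub_cancel_left, Nat.add_sub_cancel_left] at h
      exact_mod_cast h
    have hs : (-1 : ℝ) ^ (m + i + m) = (-1) ^ i := by
      rw [show m + i + m = i + 2 * m by ring, pow_add, pow_mul]; simp
    rw [add_assoc m i 1, rising_add, rising_add, hs,
      show a + (m : ℝ) + m = a + 2 * m by ring,
      show a + ((m + n : ℕ) : ℝ) + m = a + 2 * m + n by push_cast; ring,
      div_mul_div_comm]
    congr 1
    push_cast
    linear_combination ((-1 : ℝ) ^ i * (a + 2 * (m + i)) * rising (a + m) m *
      rising (a + 2 * m) i) * hch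
  rw [Finset.sum_congr rfl fun i _ => key i, ← Finset.mul_sum]
  rcases n with _ | N
  · have h1 := (rising_pos (show 0 < a + (m : ℝ) by positivity) m).ne'
    simp [rising_succ, rising_zero, h1, hb.ne']
  · rw [sum_telescope hb N (N + 1)]
    simp

lemma zernikeChi_mul_zernikeR (d ℓ p k : ℕ) (hd : 2 ≤ d) (hk : k ≤ p) (r : ℝ) :
    zernikeChi d ℓ k p * zernikeR d ℓ k r =
      ∑ m ∈ Finset.range (p + 1),
        (-1 : ℝ) ^ (k + m) * (((ℓ : ℝ) + d / 2) + 2 * k) * (p.choose k : ℝ) * (k.choose m : ℝ) *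
          rising (((ℓ : ℝ) + d / 2) + m) k / rising (((ℓ : ℝ) + d / 2) + (p : ℕ)) (k + 1) *
          r ^ (ℓ + 2 * m) := by
  have hd' : (0 : ℝ) < d := by exact_mod_cast (by omega : 0 < d)
  -- the terms with `k < m ≤ p` vanish because `C(k,m) = 0`
  rw [← Finset.sum_subset (Finset.range_subset_range.mpr (by omega : k + 1 ≤ p + 1))
    (fun m _ hm => by
      rw [Nat.choose_eq_zero_of_lt (by simpa using hm : k < m)]; simp)]
  rw [zernikeR, ← Finset.sum_flip, Finset.mul_sum, Finset.mul_sum]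
  refine Finset.sum_congr rfl fun m hm => ?_
  have hm' : m ≤ k := Nat.lt_succ_iff.mp (Finset.mem_range.mp hm)
  have hprod : ∏ j ∈ Finset.Icc 1 k, ((ℓ : ℝ) + 2 * k - ((k - m : ℕ) : ℝ) - j + d / 2)
      = rising (((ℓ : ℝ) + d / 2) + m) k := by
    rw [← prod_Icc_eq_rising]
    refine Finset.prod_congr rfl fun j _ => ?_
    rw [Nat.cast_sub hm']; ring
  have hprod' : ∏ j ∈ Finset.Icc 1 k, ((p : ℝ) + ℓ + k - j + d / 2)
      = rising (((ℓ : ℝ) + d / 2) + (p : ℕ)) k := by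
    rw [← prod_Icc_eq_rising]
    exact Finset.prod_congr rfl fun j _ => by ring
  have hs : (-1 : ℝ) ^ (k - m) = (-1) ^ (k + m) := by
    rw [show k + m = (k - m) + 2 * m by omega, pow_add, pow_mul]; simp
  have hsq : Real.sqrt (2 * ℓ + 4 * k + d) * Real.sqrt (2 * ℓ + 4 * k + d)
      = 2 * ℓ + 4 * k + d := Real.mul_self_sqrt (by positivity)
  rw [zernikeChi, hprod, hprod', hs, Nat.choose_symm hm', Nat.sub_sub_self hm', rising_succ]
  have hX := (rising_pos (show 0 < ((ℓ : ℝ) + d / 2) + (p : ℕ) by positivity) k).ne'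
  have hf : (k.factorial : ℝ) ≠ 0 := by positivity
  have h1 : (2 * p + 2 * ℓ + 2 * k + d : ℝ) ≠ 0 := by positivity
  have h2 : ((ℓ : ℝ) + d / 2) + (p : ℕ) + k = (2 * p + 2 * ℓ + 2 * k + d) / 2 := by ring
  rw [h2]
  generalize rising (((ℓ : ℝ) + d / 2) + (p : ℕ)) k = X at *
  generalize rising (((ℓ : ℝ) + d / 2) + m) k = Y at *
  have h3 : (ℓ : ℝ) + d / 2 + 2 * k
      = Real.sqrt (2 * ℓ + 4 * k + d) * Real.sqrt (2 * ℓ + 4 * k + d) / 2 := by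
    rw [hsq]; ring
  rw [h3]
  generalize Real.sqrt (2 * ℓ + 4 * k + d) = S at *
  generalize (2 * p + 2 * ℓ + 2 * k + d : ℝ) = Q at *
  field_simp

/-- The monomial `r^{ℓ+2p}` expands in the radial Zernike polynomials
as `r^{ℓ+2p} = Σ_{k=0}^p χ_{ℓ,k,p} R_{ℓ,k}(r)`. -/
theorem monomial_zernikeR_expansion (d ℓ p : ℕ) (hd : 2 ≤ d) :
    ∀ r : ℝ, r ^ (ℓ + 2 * p) =
      ∑ k ∈ Finset.range (p + 1), zernikeChi d ℓ k p * zernikeR d ℓ k r := by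
  intro r
  have hd' : (0 : ℝ) < d := by exact_mod_cast (by omega : 0 < d)
  have ha : 0 < (ℓ : ℝ) + d / 2 := by positivity
  rw [Finset.sum_congr rfl fun k hk => zernikeChi_mul_zernikeR d ℓ p k hd
    (Nat.lt_succ_iff.mp (Finset.mem_range.mp hk)) r, Finset.sum_comm]
  simp_rw [← Finset.sum_mul]
  rw [Finset.sum_eq_single p]
  · have h := sum_coeff ha p 0
    simp only [add_zero, if_true] at h
    rw [h, one_mul]
  · intro m hm hmp
    obtain ⟨n, rfl⟩ := Nat.exists_eq_add_of_le (Nat.lt_succ_iff.mp (Finset.mem_range.mp hm))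
    rw [sum_coeff ha m n, if_neg (by omega), zero_mul]
  · simp
end

section
/- Let d ≥ 2 be an integer and let ℓ, p ≥ 0 and 0 ≤ k ≤ p be integers. Then the weighted inner product of the monomial r^{ℓ+2p} with the radial Zernike polynomial R_{ℓ,k} is ∫₀¹ r^{ℓ+2p} · R_{ℓ,k}(r) · r^{d−1} dr = χ_{ℓ,k,p}, where χ_{ℓ,k,p} = (√(2ℓ+4k+d) / (2p+2ℓ+2k+d)) · binom(p,k) · k! / ∏_{j=1}^{k} (p+ℓ+k−j+d/2), with the empty product (for k = 0) equal to 1. -/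
/-!
Put `a = ℓ + d/2`, `x = p + a + k` and `Q(t) = ∏_{j=1}^k (a + 2k - j - t)`. Termwise integration turns
the inner product into
`√(2ℓ+4k+d) / 2 · ∑_{s=0}^k (-1)^s binom(k,s) / k! · Q(s) / (x - s)`.
Since `deg Q ≤ k`, the sum is, up to the sign `(-1)^k`, the partial fraction expansion of
`Q(x) / ∏_{s=0}^k (x - s)` (`partial_fractions`, obtained from Lagrange interpolation at the nodes
`0, …, k`). Finally `Q(x) = ∏_{j=1}^k (k - p - j) = (-1)^k binom(p,k) k!`, and the denominator is the
product in `χ` together with the factor `x`.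
-/

open Finset

theorem prod_erase_sub (i m : ℕ) :
    ∏ j ∈ (range (i + m + 1)).erase i, ((i : ℝ) - j)
      = (-1) ^ m * (i.factorial : ℝ) * (m.factorial : ℝ) := by
  induction m with
  | zero =>
    have h : (range (i + 0 + 1)).erase i = range i := by
      ext j; simp only [mem_erase, mem_range]; omega
    rw [h, ← prod_range_reflect, ← prod_range_add_one_eq_factorial i]
    push_cast
    simp only [pow_zero, one_mul, Nat.factorial_zero, Nat.cast_one, mul_one]
    refine prod_congr rfl fun j hj => ?_
    have hj' : j + 1 ≤ i := mem_range.mp hj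
    rw [Nat.sub_sub, add_comm 1 j, Nat.cast_sub hj']
    push_cast; ring
  | succ m ih =>
    have h : (range (i + (m + 1) + 1)).erase i
        = insert (i + m + 1) ((range (i + m + 1)).erase i) := by
      ext j; simp only [mem_erase, mem_range, mem_insert]; omega
    rw [h, prod_insert (by simp), ih, Nat.factorial_succ]
    push_cast; ring

/-- The barycentric weights of the nodes `0, …, k` are signed binomial coefficients over `k!`. -/
theorem nodalWeight_range {k i : ℕ} (hi : i ≤ k) :
    Lagrange.nodalWeight (range (k + 1)) (fun j : ℕ => (j : ℝ)) i
      = (-1) ^ k * ((-1) ^ i * (k.choose i : ℝ) * (k.factorial : ℝ)⁻¹) := by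
  obtain ⟨m, rfl⟩ := Nat.exists_eq_add_of_le hi
  rw [Lagrange.nodalWeight, prod_inv_distrib, prod_erase_sub, Nat.cast_add_choose]
  have h1 : ((-1 : ℝ) ^ i) * (-1) ^ i = 1 := by rw [← mul_pow]; simp
  have h2 : ((-1 : ℝ) ^ m) * (-1) ^ m = 1 := by rw [← mul_pow]; simp
  have f1 : (i.factorial : ℝ) ≠ 0 := by positivity
  have f2 : (m.factorial : ℝ) ≠ 0 := by positivity
  have f3 : ((i + m).factorial : ℝ) ≠ 0 := by positivity
  rw [pow_add]
  apply inv_eq_of_mul_eq_one_right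
  field_simp
  linear_combination (-1 : ℝ) ^ m * (-1) ^ m * h1 + h2

/-- Partial fraction expansion of `Q / ∏_{s=0}^k (X - s)` for `deg Q ≤ k`. -/
theorem partial_fractions (k : ℕ) (Q : Polynomial ℝ) (hQ : Q.degree < ((k + 1 : ℕ) : WithBot ℕ))
    (x : ℝ) (hx : ∀ s ∈ range (k + 1), x ≠ s) :
    ∑ s ∈ range (k + 1),
        (-1 : ℝ) ^ s * (k.choose s : ℝ) * (k.factorial : ℝ)⁻¹ * Q.eval (s : ℝ) * (x - s)⁻¹
      = (-1) ^ k * Q.eval x / ∏ s ∈ range (k + 1), (x - s) := by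
  have h0 : ∏ s ∈ range (k + 1), (x - s) ≠ 0 :=
    prod_ne_zero_iff.mpr fun s hs => sub_ne_zero.mpr (hx s hs)
  have hinterp := Lagrange.eq_interpolate (s := range (k + 1)) (v := fun j : ℕ => (j : ℝ))
    (Nat.cast_injective.injOn) (f := Q) (by simpa using hQ)
  have hev := congrArg (Polynomial.eval x) hinterp
  rw [Lagrange.eval_interpolate_not_at_node _ hx, Lagrange.eval_nodal] at hev
  have hsq : ((-1 : ℝ) ^ k) * (-1) ^ k = 1 := by rw [← mul_pow]; simp
  have hsum : ∑ i ∈ range (k + 1), Lagrange.nodalWeight (range (k + 1)) (fun j : ℕ => (j : ℝ)) i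
        * (x - i)⁻¹ * Q.eval (i : ℝ)
      = (-1) ^ k * ∑ s ∈ range (k + 1),
        (-1 : ℝ) ^ s * (k.choose s : ℝ) * (k.factorial : ℝ)⁻¹ * Q.eval (s : ℝ) * (x - s)⁻¹ := by
    rw [mul_sum]
    refine sum_congr rfl fun i hi => ?_
    rw [nodalWeight_range (Nat.lt_succ_iff.mp (mem_range.mp hi))]
    ring
  rw [hsum] at hev
  rw [eq_div_iff h0, hev]
  set S := ∑ s ∈ range (k + 1),
    (-1 : ℝ) ^ s * (k.choose s : ℝ) * (k.factorial : ℝ)⁻¹ * Q.eval (s : ℝ) * (x - s)⁻¹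
  linear_combination (-(S * ∏ s ∈ range (k + 1), (x - s))) * hsq

theorem prod_sub_sub_eq_choose {p k : ℕ} (hk : k ≤ p) :
    ∏ j ∈ Icc 1 k, ((k : ℝ) - p - j) = (-1) ^ k * ((p.choose k : ℝ) * (k.factorial : ℝ)) := by
  obtain ⟨m, rfl⟩ := Nat.exists_eq_add_of_le hk
  have h : ∀ n : ℕ, (m.factorial : ℝ) * ∏ j ∈ Icc 1 n, (-(m : ℝ) - j)
      = (-1) ^ n * ((n + m).factorial : ℝ) := by
    intro n
    induction n with
    | zero => simp
    | succ n ih =>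
      rw [prod_Icc_succ_top (by omega), ← mul_assoc, ih,
        show n + 1 + m = (n + m) + 1 by omega, Nat.factorial_succ]
      push_cast; ring
  have f1 : (k.factorial : ℝ) ≠ 0 := by positivity
  have f2 : (m.factorial : ℝ) ≠ 0 := by positivity
  have hc : ∏ j ∈ Icc 1 k, ((k : ℝ) - ((k + m : ℕ) : ℝ) - j) = ∏ j ∈ Icc 1 k, (-(m : ℝ) - j) :=
    prod_congr rfl fun j _ => by push_cast; ring
  rw [hc, Nat.cast_add_choose]
  field_simp
  linear_combination h k

theorem integral_monomial_zernikeR (d ℓ p k : ℕ) (hd : 2 ≤ d) :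
    ∫ r in (0:ℝ)..1, r ^ (ℓ + 2 * p) * zernikeR d ℓ k r * r ^ (d - 1)
      = Real.sqrt (2 * ℓ + 4 * k + d) * ∑ s ∈ range (k + 1),
          (-1 : ℝ) ^ s * (k.choose s : ℝ) * (k.factorial : ℝ)⁻¹ *
            (∏ j ∈ Icc 1 k, ((ℓ : ℝ) + 2 * k - s - j + d / 2)) *
            (2 * ((p : ℝ) + ℓ + k + d / 2 - s))⁻¹ := by
  have hfun : ∀ r : ℝ, r ^ (ℓ + 2 * p) * zernikeR d ℓ k r * r ^ (d - 1)
      = Real.sqrt (2 * ℓ + 4 * k + d) * ∑ s ∈ range (k + 1),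
          (-1 : ℝ) ^ s * (k.choose s : ℝ) * (k.factorial : ℝ)⁻¹ *
            (∏ j ∈ Icc 1 k, ((ℓ : ℝ) + 2 * k - s - j + d / 2)) *
            r ^ (ℓ + 2 * p + (ℓ + 2 * (k - s)) + (d - 1)) := by
    intro r
    simp only [zernikeR, mul_sum, sum_mul]
    refine sum_congr rfl fun s _ => ?_
    rw [pow_add r _ (d - 1), pow_add r (ℓ + 2 * p)]
    ring
  simp only [hfun]
  rw [intervalIntegral.integral_const_mul, intervalIntegral.integral_finsetSum
    fun s _ => (by fun_prop : Continuous _).intervalIntegrable _ _]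
  congr 1
  refine sum_congr rfl fun s hs => ?_
  have hs' : s ≤ k := Nat.lt_succ_iff.mp (mem_range.mp hs)
  rw [intervalIntegral.integral_const_mul, integral_pow]
  congr 1
  rw [one_pow, zero_pow (by omega), sub_zero, one_div]
  congr 1
  push_cast [Nat.cast_sub hs', Nat.cast_sub (show 1 ≤ d by omega)]
  ring

/-- For `0 ≤ k ≤ p`, the weighted inner product of the monomial
`r^{ℓ+2p}` with the radial Zernike polynomial `R_{ℓ,k}` equals `χ_{ℓ,k,p}`. -/
theorem monomial_inner_zernikeR (d ℓ p k : ℕ) (hd : 2 ≤ d) (hk : k ≤ p) :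
    ∫ r in (0:ℝ)..1, r ^ (ℓ + 2 * p) * zernikeR d ℓ k r * r ^ (d - 1)
      = zernikeChi d ℓ k p := by
  have hd' : (2 : ℝ) ≤ d := by exact_mod_cast hd
  set x : ℝ := (p : ℝ) + ℓ + k + d / 2 with hxdef
  have hxs : ∀ s ∈ range (k + 1), 0 < x - s := by
    intro s hs
    have hs' : (s : ℝ) ≤ k := by exact_mod_cast Nat.lt_succ_iff.mp (mem_range.mp hs)
    have : (0 : ℝ) ≤ (p : ℝ) + ℓ := by positivity
    rw [hxdef]; linarith
  let Q : Polynomial ℝ :=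
    ∏ j ∈ Icc 1 k, (Polynomial.C ((ℓ : ℝ) + 2 * k - j + d / 2) - Polynomial.X)
  have hQeval : ∀ t : ℝ, Q.eval t = ∏ j ∈ Icc 1 k, ((ℓ : ℝ) + 2 * k - t - j + d / 2) := by
    intro t
    simp only [Q, Polynomial.eval_prod, Polynomial.eval_sub, Polynomial.eval_C, Polynomial.eval_X]
    exact prod_congr rfl fun j _ => by ring
  have hQdeg : Q.degree < ((k + 1 : ℕ) : WithBot ℕ) := by
    refine lt_of_le_of_lt (Polynomial.degree_prod_le _ _) ?_
    refine lt_of_le_of_lt (sum_le_card_nsmul _ _ 1 fun j _ => ?_) ?_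
    · refine (Polynomial.degree_sub_le _ _).trans (max_le ?_ Polynomial.degree_X_le)
      exact Polynomial.degree_C_le.trans (by norm_num)
    · simp only [Nat.card_Icc, Nat.add_sub_cancel, nsmul_one]
      exact_mod_cast Nat.lt_succ_self k
  have hQx : Q.eval x = (-1) ^ k * ((p.choose k : ℝ) * (k.factorial : ℝ)) := by
    rw [hQeval, ← prod_sub_sub_eq_choose hk]
    exact prod_congr rfl fun j _ => by rw [hxdef]; ring
  have hpf := partial_fractions k Q hQdeg x fun s hs => sub_ne_zero.mp (hxs s hs).ne'
  have hden : ∏ s ∈ range (k + 1), (x - s)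
      = x * ∏ j ∈ Icc 1 k, ((p : ℝ) + ℓ + k - j + d / 2) := by
    rw [prod_range_succ', mul_comm, Nat.cast_zero, sub_zero, range_eq_Ico,
      prod_Ico_add' (fun s : ℕ => x - (s : ℝ)) 0 k 1]
    congr 1
    refine prod_congr (by ext j; simp only [mem_Ico, mem_Icc]; omega) fun j _ => ?_
    rw [hxdef]; ring
  have hsq : ((-1 : ℝ) ^ k) * (-1) ^ k = 1 := by rw [← mul_pow]; simp
  rw [hQx, hden, ← mul_assoc, hsq, one_mul] at hpf
  have hsum : ∑ s ∈ range (k + 1),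
          (-1 : ℝ) ^ s * (k.choose s : ℝ) * (k.factorial : ℝ)⁻¹ *
            (∏ j ∈ Icc 1 k, ((ℓ : ℝ) + 2 * k - s - j + d / 2)) * (2 * (x - s))⁻¹
      = 2⁻¹ * ∑ s ∈ range (k + 1),
        (-1 : ℝ) ^ s * (k.choose s : ℝ) * (k.factorial : ℝ)⁻¹ * Q.eval (s : ℝ) * (x - s)⁻¹ := by
    rw [mul_sum]
    refine sum_congr rfl fun s _ => ?_
    rw [hQeval, mul_inv]
    ring
  rw [integral_monomial_zernikeR d ℓ p k hd, hsum, hpf, zernikeChi,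
    show (2 : ℝ) * p + 2 * ℓ + 2 * k + d = 2 * x by rw [hxdef]; ring]
  simp only [div_eq_mul_inv, mul_inv]
  ring
end
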